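/- For every natural number n ≥ 2, the number of positive integers k with 2^k + 1 ≤ n, plus one, equals ⌈log₂ n⌉ (the ceiling of the base-2 logarithm of n, i.e., Nat.clog 2 n). (Hence the online hash-chain growth algorithm, which creates a new pebble exactly when the total number of generated hash elements reaches 2^k + 1 for some k ≥ 1 and creates one final pebble for the seed when it halts, stores exactly ⌈log₂ n⌉ pebbles after generating n hash elements.) -/

import Mathlib

/-- The online hash-chain growth algorithm stores exactly `⌈log₂ n⌉` pebbles
after generating `n ≥ 2` hash elements: the number of positive integers `k`
with `2^k + 1 ≤ n`, plus one (for the seed pebble), equals `Nat.clog 2 n`. -/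
theorem stmt_12 (n : ℕ) (hn : 2 ≤ n) :
    {k : ℕ | 0 < k ∧ 2 ^ k + 1 ≤ n}.ncard + 1 = Nat.clog 2 n := by
  have hset : {k : ℕ | 0 < k ∧ 2 ^ k + 1 ≤ n} = ↑(Finset.Ico 1 (Nat.clog 2 n)) := by
    ext k
    have h := Nat.lt_clog_iff_pow_lt (b := 2) (by norm_num) (x := n) (y := k)
    simp only [Set.mem_ofPred_eq, Finset.coe_Ico, Set.mem_Ico]
    rw [h]
    omega
  have hpos : 0 < Nat.clog 2 n := Nat.clog_pos (by norm_num) hn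
  rw [hset, Set.ncard_coe_finset, Nat.card_Ico]
  omega
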